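/- Basis lifting for the formal Brieskorn lattice (correctness of the basis representation underlying the normal form algorithm): if m₁,…,m_μ ∈ R are power series whose residue classes form a ℂ-basis of the Milnor algebra R/J(f), then the residue classes of m₁,…,m_μ in H = A/M form a ℂ[[s]]-basis of H; in particular every element of A is congruent modulo M to a unique ℂ[[s]]-linear combination of m₁,…,m_μ. -/

import Mathlib

noncomputable section

open scoped Pointwise

/-- The formal partial derivative `∂ᵢ` with respect to the `i`th variable, determined by
`coeff α (∂ᵢ g) = (α i + 1) • coeff (α + eᵢ) g`. -/
def pd {σ : Type*} (i : σ) (g : MvPowerSeries σ ℂ) : MvPowerSeries σ ℂ :=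
  fun α => ((α i : ℂ) + 1) * MvPowerSeries.coeff (α + Finsupp.single i 1) g

lemma coeff_pd {σ : Type*} (i : σ) (g : MvPowerSeries σ ℂ) (α : σ →₀ ℕ) :
    MvPowerSeries.coeff α (pd i g) =
      ((α i : ℂ) + 1) * MvPowerSeries.coeff (α + Finsupp.single i 1) g := rfl

variable (n : ℕ)

/-- `R = ℂ[[x₁,…,xₙ]]`. -/
abbrev R' := MvPowerSeries (Fin n) ℂ

/-- `A = ℂ[[s,x₁,…,xₙ]]`, where `s` is the 0th variable and `xᵢ` is the variable
of index `i` (`1 ≤ i ≤ n`). -/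
abbrev A' := MvPowerSeries (Fin (n + 1)) ℂ

/-- The variable `s` of `A`. -/
def sv : A' n := MvPowerSeries.X 0

/-- Forget the `s`-exponent of a multi-index of `A`. -/
def tailF (β : Fin (n + 1) →₀ ℕ) : Fin n →₀ ℕ :=
  Finsupp.equivFunOnFinite.symm fun i => β i.succ

/-- The inclusion `R ⊆ A` as the subring of series not involving `s`. -/
def inclR (g : R' n) : A' n :=
  fun β => if β 0 = 0 then MvPowerSeries.coeff (tailF n β) g else 0

/-- The inclusion `ℂ[[s]] ⊆ A` as the subring of series in `s` alone. -/
def toA (p : PowerSeries ℂ) : A' n :=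
  fun β => if tailF n β = 0 then PowerSeries.coeff (β 0) p else 0

lemma coeff_inclR (g : R' n) (β : Fin (n + 1) →₀ ℕ) :
    MvPowerSeries.coeff β (inclR n g) =
      if β 0 = 0 then MvPowerSeries.coeff (tailF n β) g else 0 := rfl

/-- The `ℂ[[s]]`-linear operator `Fᵢ(g) = ∂ᵢ(f)·g − s·∂ᵢ(g)` on `A`. -/
def FF (f : R' n) (i : Fin n) (g : A' n) : A' n :=
  inclR n (pd i f) * g - sv n * pd i.succ g

/-- `M = range F₁ + ⋯ + range Fₙ`, so that `H = A/M` is the formal Brieskorn lattice. -/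
def Mset (f : R' n) : Set (A' n) :=
  {a | ∃ q : Fin n → A' n, a = ∑ i, FF n f i (q i)}

/-- The Jacobian ideal `J(f) = ⟨∂₁f,…,∂ₙf⟩` of `R`. -/
def Jf (f : R' n) : Ideal (R' n) :=
  Ideal.span (Set.range fun i : Fin n => pd i f)

/-- The maximal ideal `⟨x₁,…,xₙ⟩` of `R = ℂ[[x₁,…,xₙ]]`. -/
def mx : Ideal (R' n) :=
  Ideal.span (Set.range (MvPowerSeries.X : Fin n → R' n))

/-- The ideal `J(f)·A` of `A` generated by `∂₁(f),…,∂ₙ(f)`. -/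
def JA (f : R' n) : Ideal (A' n) :=
  Ideal.span (Set.range fun i : Fin n => inclR n (pd i f))

/-- The ideal `⟨x₁,…,xₙ⟩·A` of `A` generated by the variables `x₁,…,xₙ` (not `s`). -/
def XA : Ideal (A' n) :=
  Ideal.span (Set.range fun i : Fin n => (MvPowerSeries.X i.succ : A' n))

lemma pd_add {σ : Type*} (i : σ) (a b : MvPowerSeries σ ℂ) :
    pd i (a + b) = pd i a + pd i b := by
  ext α; simp [coeff_pd, mul_add]

lemma pd_smul {σ : Type*} (i : σ) (c : ℂ) (a : MvPowerSeries σ ℂ) :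
    pd i (c • a) = c • pd i a := by
  ext α; simp [coeff_pd]; ring

lemma FF_add (f : R' n) (i : Fin n) (a b : A' n) :
    FF n f i (a + b) = FF n f i a + FF n f i b := by
  simp only [FF, pd_add, mul_add]; ring

lemma FF_smul (f : R' n) (i : Fin n) (c : ℂ) (a : A' n) :
    FF n f i (c • a) = c • FF n f i a := by
  simp only [FF, pd_smul, Algebra.mul_smul_comm, smul_sub]

lemma FF_zero (f : R' n) (i : Fin n) : FF n f i 0 = 0 := by
  simpa using FF_smul n f i 0 0

/-- `M` as a `ℂ`-submodule of `A`. -/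
def Msub (f : R' n) : Submodule ℂ (A' n) where
  carrier := Mset n f
  zero_mem' := ⟨0, by simp [FF_zero]⟩
  add_mem' := by
    rintro a b ⟨q, rfl⟩ ⟨q', rfl⟩
    exact ⟨q + q', by simp [FF_add, Finset.sum_add_distrib]⟩
  smul_mem' := by
    rintro c a ⟨q, rfl⟩
    exact ⟨c • q, by simp [FF_smul, Finset.smul_sum]⟩

/-- The inclusion `R ⊆ A` as a `ℂ`-linear map. -/
def inclL : R' n →ₗ[ℂ] A' n where
  toFun := inclR n
  map_add' a b := by
    ext β; simp only [coeff_inclR, map_add]; split <;> simp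
  map_smul' c a := by
    ext β; simp only [coeff_inclR, map_smul, RingHom.id_apply]; split <;> simp



lemma free_reg {R M ι : Type*} [CommRing R] [AddCommGroup M] [Module R M] (b : Module.Basis ι R M)
    (I : Ideal R) (y : R) (hy : ∀ r, y * r ∈ I → r ∈ I) (x : M)
    (hx : y • x ∈ I • (⊤ : Submodule R M)) : x ∈ I • (⊤ : Submodule R M) := by
  have key : ∀ z ∈ I • (⊤ : Submodule R M), ∀ i, b.repr z i ∈ I := by
    intro z hz i
    have h1 : b.coord i z ∈ Submodule.map (b.coord i) (I • (⊤ : Submodule R M)) :=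
      Submodule.mem_map_of_mem hz
    rw [Submodule.map_smul''] at h1
    have h2 : b.coord i z ∈ I • (⊤ : Submodule R R) := Submodule.smul_mono (le_refl I) le_top h1
    simpa using h2
  have h3 := key _ hx
  rw [← b.linearCombination_repr x, Finsupp.linearCombination_apply, Finsupp.sum]
  refine Submodule.sum_mem _ fun i _ => Submodule.smul_mem_smul (hy _ ?_) trivial
  simpa using h3 i

section koszul
variable {R : Type*} [CommRing R] {n : ℕ}

/-- Koszul differential. -/
noncomputable def kd (d : Module.Dual R (Fin n → R)) :
    ExteriorAlgebra R (Fin n → R) →ₗ[R] ExteriorAlgebra R (Fin n → R) :=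
  CliffordAlgebra.contractLeft (Q := (0 : QuadraticForm R (Fin n → R))) d

lemma kd_kd (d : Module.Dual R (Fin n → R)) (x) : kd d (kd d x) = 0 :=
  CliffordAlgebra.contractLeft_contractLeft d x

lemma kd_mul (d : Module.Dual R (Fin n → R)) (v x) :
    kd d (ExteriorAlgebra.ι R v * x) = d v • x - ExteriorAlgebra.ι R v * kd d x :=
  CliffordAlgebra.contractLeft_ι_mul (Q := (0 : QuadraticForm R (Fin n → R))) d v x

lemma kd_ι (d : Module.Dual R (Fin n → R)) (v) :
    kd d (ExteriorAlgebra.ι R v) = algebraMap R _ (d v) :=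
  CliffordAlgebra.contractLeft_ι (Q := (0 : QuadraticForm R (Fin n → R))) d v

lemma kd_one (d : Module.Dual R (Fin n → R)) : kd d 1 = 0 :=
  CliffordAlgebra.contractLeft_one (Q := (0 : QuadraticForm R (Fin n → R))) d

lemma ι_mul_mem (v : Fin n → R) (p : ℕ) (x) (hx : x ∈ ⋀[R]^p (Fin n → R)) :
    ExteriorAlgebra.ι R v * x ∈ ⋀[R]^(p+1) (Fin n → R) := by
  rw [ExteriorAlgebra.exteriorPower, pow_succ']
  exact Submodule.mul_mem_mul ⟨v, rfl⟩ hx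

lemma kd_mem (d : Module.Dual R (Fin n → R)) (p : ℕ) :
    ∀ x ∈ ⋀[R]^(p+1) (Fin n → R), kd d x ∈ ⋀[R]^p (Fin n → R) := by
  induction p with
  | zero =>
    intro x hx
    rw [ExteriorAlgebra.exteriorPower, zero_add, pow_one] at hx
    obtain ⟨v, rfl⟩ := hx
    rw [kd_ι, ExteriorAlgebra.exteriorPower, pow_zero]
    exact Submodule.algebraMap_mem _
  | succ p ih =>
    intro x hx
    rw [ExteriorAlgebra.exteriorPower, pow_succ'] at hx
    refine Submodule.mul_induction_on hx ?_ ?_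
    · rintro _ ⟨v, rfl⟩ y hy
      rw [kd_mul]
      exact Submodule.sub_mem _ (Submodule.smul_mem _ _ hy) (ι_mul_mem _ _ _ (ih _ hy))
    · intro a b ha hb
      rw [map_add]; exact Submodule.add_mem _ ha hb

/-- vanishing of Koszul homology `H_p(d; R/I)`. -/
def KV (d : Module.Dual R (Fin n → R)) (p : ℕ) (I : Ideal R) : Prop :=
  ∀ c ∈ ⋀[R]^(p+1) (Fin n → R), kd d c ∈ I • ⋀[R]^p (Fin n → R) →
    ∃ b ∈ ⋀[R]^(p+2) (Fin n → R), c - kd d b ∈ I • ⋀[R]^(p+1) (Fin n → R)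

lemma KV_top (d : Module.Dual R (Fin n → R)) (I : Ideal R) : KV d n I := by
  intro c hc _
  refine ⟨0, Submodule.zero_mem _, ?_⟩
  have b := (Pi.basisFun R (Fin n)).exteriorPower (n := n+1)
  have : IsEmpty (Set.powersetCard (Fin n) (n+1)) := by
    constructor
    rintro ⟨s, hs⟩
    have := Finset.card_le_univ s
    have h2 : s.card = n + 1 := hs
    simp at this; omega
  have h0 : (⟨c, hc⟩ : ⋀[R]^(n+1) (Fin n → R)) = 0 := b.ext_elem (fun i => isEmptyElim i)
  have : c = 0 := congrArg Subtype.val h0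
  simp [this]

lemma ext_reg (p : ℕ) (I : Ideal R) (y : R) (hy : ∀ r, y * r ∈ I → r ∈ I)
    (x : ExteriorAlgebra R (Fin n → R)) (hx : x ∈ ⋀[R]^p (Fin n → R))
    (h : y • x ∈ I • ⋀[R]^p (Fin n → R)) : x ∈ I • ⋀[R]^p (Fin n → R) := by
  have := free_reg ((Pi.basisFun R (Fin n)).exteriorPower (n := p)) I y hy ⟨x, hx⟩
  rw [Submodule.mem_smul_top_iff, Submodule.mem_smul_top_iff] at this
  exact this h

lemma KV_step (d : Module.Dual R (Fin n → R)) (p : ℕ) (I : Ideal R) (v : Fin n → R)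
    (hy : ∀ r, d v * r ∈ I → r ∈ I) (H : KV d (p+1) (I ⊔ Ideal.span {d v})) : KV d p I := by
  intro c hc hdc
  have hI : ∀ q, ∀ x ∈ I • ⋀[R]^(q+1) (Fin n → R), kd d x ∈ I • ⋀[R]^q (Fin n → R) := by
    intro q x hx
    have := Submodule.mem_map_of_mem (f := kd d) hx
    rw [Submodule.map_smul''] at this
    refine Submodule.smul_mono (le_refl I) ?_ this
    rintro _ ⟨z, hz, rfl⟩
    exact kd_mem d q z hz
  have hhI : ∀ q, ∀ x ∈ I • ⋀[R]^q (Fin n → R),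
      ExteriorAlgebra.ι R v * x ∈ I • ⋀[R]^(q+1) (Fin n → R) := by
    intro q x hx
    have := Submodule.mem_map_of_mem (f := LinearMap.mulLeft R (ExteriorAlgebra.ι R v)) hx
    rw [Submodule.map_smul''] at this
    refine Submodule.smul_mono (le_refl I) ?_ this
    rintro _ ⟨z, hz, rfl⟩
    exact ι_mul_mem v q z hz
  have hmul := kd_mul d v c
  obtain ⟨b, hb, hb2⟩ := H (ExteriorAlgebra.ι R v * c) (ι_mul_mem v _ c hc) (by
    rw [hmul, Submodule.sup_smul]
    refine Submodule.sub_mem _ ?_ ?_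
    · exact Submodule.mem_sup_right (Submodule.smul_mem_smul (Ideal.mem_span_singleton_self _) hc)
    · exact Submodule.mem_sup_left (hhI _ _ hdc))
  rw [Submodule.sup_smul, Submodule.mem_sup] at hb2
  obtain ⟨i, hi, z, hz, hiz⟩ := hb2
  rw [Submodule.ideal_span_singleton_smul] at hz
  obtain ⟨e, he, rfl⟩ := hz
  refine ⟨e, he, ext_reg _ I (d v) hy _ (Submodule.sub_mem _ hc (kd_mem d _ _ he)) ?_⟩
  have h1 := congrArg (kd d) hiz
  simp only [map_add, map_sub, kd_kd, hmul, DistribSMul.toLinearMap_apply, map_smul] at h1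
  have h2 : d v • (c - kd d e) = kd d i + ExteriorAlgebra.ι R v * kd d c := by
    rw [smul_sub]
    rw [← sub_eq_zero, ← neg_eq_zero, ← sub_eq_zero.2 h1]; abel
  rw [h2]
  exact Submodule.add_mem _ (hI _ _ hi) (hhI _ _ hdc)

lemma kd_two (f : Fin n → R) (d : Module.Dual R (Fin n → R)) (hd : ∀ v, d v = ∑ i, f i * v i) :
    ∀ b ∈ ⋀[R]^2 (Fin n → R), ∃ a : Fin n → Fin n → R, (∀ i j, a i j = - a j i) ∧
      kd d b = ExteriorAlgebra.ι R (fun i => ∑ j, f j * a i j) := by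
  intro b hb
  rw [ExteriorAlgebra.exteriorPower, pow_two] at hb
  refine Submodule.mul_induction_on hb ?_ ?_
  · rintro _ ⟨v, rfl⟩ _ ⟨w, rfl⟩
    refine ⟨fun i j => v j * w i - w j * v i, fun i j => by ring, ?_⟩
    rw [kd_mul, kd_ι, ← Algebra.commutes, ← Algebra.smul_def, ← map_smul, ← map_smul, ← map_sub]
    congr 1
    ext i
    simp only [hd, Pi.sub_apply, Pi.smul_apply, smul_eq_mul, Finset.sum_mul, ← Finset.sum_sub_distrib]
    exact Finset.sum_congr rfl fun j _ => by ring
  · rintro x y ⟨a, ha, hx⟩ ⟨a', ha', hy⟩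
    refine ⟨a + a', fun i j => ?_, ?_⟩
    · simp only [Pi.add_apply]; rw [ha, ha']; ring
    · rw [map_add, hx, hy, ← map_add]; congr 1; ext i
      simp [mul_add, Finset.sum_add_distrib]

/-- Main Koszul result: if ideals `I 0 = 0 ⊂ I 1 ⊂ ...` come from a regular sequence in `(f)`,
all relations between the `f i` are trivial. -/
theorem koszul_trivial (f : Fin n → R) (I : ℕ → Ideal R) (y : ℕ → R) (h0 : I 0 = ⊥)
    (hs : ∀ k < n, I (k+1) = I k ⊔ Ideal.span {y k})
    (hr : ∀ k < n, ∀ r, y k * r ∈ I k → r ∈ I k)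
    (hy : ∀ k < n, y k ∈ Ideal.span (Set.range f))
    (q : Fin n → R) (hq : ∑ i, f i * q i = 0) :
    ∃ a : Fin n → Fin n → R, (∀ i j, a i j = - a j i) ∧ ∀ i, q i = ∑ j, f j * a i j := by
  let d : Module.Dual R (Fin n → R) := ∑ i, f i • LinearMap.proj i
  have hd : ∀ v, d v = ∑ i, f i * v i := by intro v; simp [d]
  have hK : ∀ k ≤ n, KV d (n - k) (I (n - k)) := by
    intro k
    induction k with
    | zero => intro _; exact KV_top d _
    | succ k ih =>
      intro hk
      have e : n - k = (n - (k+1)) + 1 := by omega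
      have hlt : n - (k+1) < n := by omega
      have := ih (by omega)
      rw [e, hs _ hlt] at this
      obtain ⟨v, hv⟩ := (Ideal.mem_span_range_iff_exists_fun).1 (hy _ hlt)
      have hv' : d v = y (n - (k+1)) := by
        rw [hd, ← hv]; exact Finset.sum_congr rfl fun i _ => mul_comm _ _
      rw [← hv'] at this
      refine KV_step d _ _ v ?_ this
      rw [hv']; exact hr _ hlt
  have := hK n le_rfl
  rw [Nat.sub_self, h0] at this
  obtain ⟨b, hb, hb2⟩ := this (ExteriorAlgebra.ι R q) (by
    rw [ExteriorAlgebra.exteriorPower, zero_add, pow_one]; exact ⟨q, rfl⟩) (by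
    rw [kd_ι, hd, hq]; simp)
  obtain ⟨a, ha, hab⟩ := kd_two f d hd b hb
  refine ⟨a, ha, ?_⟩
  rw [Submodule.bot_smul, Submodule.mem_bot, sub_eq_zero, hab] at hb2
  exact fun i => congrFun (ExteriorAlgebra.ι_inj R _ _ |>.1 hb2) i

end koszul

open MvPowerSeries in
/-- Ideal generated by `X i ^ m` for `i < k`, described by coefficients. -/
def IX (n m k : ℕ) : Ideal (R' n) where
  carrier := {g | ∀ α : Fin n →₀ ℕ, (∀ i : Fin n, i.1 < k → α i < m) → coeff α g = 0}
  zero_mem' := by intro α _; simp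
  add_mem' := by
    intro a b ha hb α h
    rw [map_add, ha α h, hb α h, add_zero]
  smul_mem' := by
    intro r g hg α h
    rw [smul_eq_mul, coeff_mul]
    refine Finset.sum_eq_zero fun x hx => ?_
    rw [hg x.2 (fun i hi => ?_), mul_zero]
    have h1 := Finset.HasAntidiagonal.mem_antidiagonal.1 hx
    have h2 : x.1 i + x.2 i = α i := by rw [← h1]; rfl
    have := h i hi
    omega

open MvPowerSeries in
lemma IX_zero (n m : ℕ) : IX n m 0 = ⊥ := by
  rw [eq_bot_iff]
  intro g hg
  rw [Ideal.mem_bot]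
  ext α
  exact hg α (fun i hi => absurd hi (by omega))

open MvPowerSeries in
lemma IX_succ (n m k : ℕ) (hk : k < n) :
    IX n m (k+1) = IX n m k ⊔ Ideal.span {(X ⟨k, hk⟩ ^ m : R' n)} := by
  apply le_antisymm
  · intro g hg
    let g1 : R' n := fun α => if α ⟨k, hk⟩ < m then coeff α g else 0
    have hg1 : ∀ α, coeff α g1 = if α ⟨k, hk⟩ < m then coeff α g else 0 := fun α => rfl
    rw [Submodule.mem_sup]
    refine ⟨g1, ?_, g - g1, ?_, by ring⟩
    · intro α h
      rw [hg1]
      split_ifs with h2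
      · refine hg α fun i hi => ?_
        rcases Nat.lt_succ_iff_lt_or_eq.1 hi with h3 | h3
        · exact h i h3
        · have : i = ⟨k, hk⟩ := Fin.ext h3
          rw [this]; exact h2
      · rfl
    · rw [Ideal.mem_span_singleton, X_pow_dvd_iff]
      intro α h
      rw [map_sub, hg1, if_pos h, sub_self]
  · rw [sup_le_iff, Ideal.span_singleton_le_iff_mem]
    constructor
    · intro g hg α h
      exact hg α fun i hi => h i (by omega)
    · intro α h
      exact (X_pow_dvd_iff.1 (dvd_refl (X ⟨k, hk⟩ ^ m : R' n))) α (h _ (by simp))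

open MvPowerSeries in
lemma IX_reg (n m k : ℕ) (hk : k < n) (r : R' n) (h : X ⟨k, hk⟩ ^ m * r ∈ IX n m k) :
    r ∈ IX n m k := by
  intro α hα
  have := h (Finsupp.single ⟨k, hk⟩ m + α) (by
    intro i hi
    have : (⟨k, hk⟩ : Fin n) ≠ i := by rintro rfl; simp at hi
    simpa [Finsupp.single_apply, this] using hα i hi)
  rwa [X_pow_eq, coeff_add_monomial_mul, one_mul] at this

lemma jac_trivial (n : ℕ) (f : R' n) (m : ℕ) (hiso : mx n ^ m ≤ Jf n f)
    (q : Fin n → R' n) (hq : ∑ i, pd i f * q i = 0) :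
    ∃ a : Fin n → Fin n → R' n, (∀ i j, a i j = - a j i) ∧ ∀ i, q i = ∑ j, pd j f * a i j := by
  refine koszul_trivial (fun i => pd i f) (IX n m)
    (fun k => if h : k < n then MvPowerSeries.X ⟨k, h⟩ ^ m else 0) (IX_zero n m) ?_ ?_ ?_ q hq
  · intro k hk; rw [dif_pos hk]; exact IX_succ n m k hk
  · intro k hk r; rw [dif_pos hk]; exact IX_reg n m k hk r
  · intro k hk; rw [dif_pos hk]
    exact hiso (Ideal.pow_mem_pow (Ideal.subset_span (Set.mem_range_self _)) m)

lemma pd_eq {σ : Type*} (i : σ) (g : MvPowerSeries σ ℂ) : pd i g = MvPowerSeries.pderiv ℂ i g := by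
  ext α; rw [coeff_pd, MvPowerSeries.coeff_pderiv, mul_comm]

lemma pd_mul {σ : Type*} (i : σ) (a b : MvPowerSeries σ ℂ) :
    pd i (a * b) = pd i a * b + a * pd i b := by
  simp only [pd_eq, Derivation.leibniz, smul_eq_mul]; ring

lemma pd_sub {σ : Type*} (i : σ) (a b : MvPowerSeries σ ℂ) : pd i (a - b) = pd i a - pd i b := by
  simp only [pd_eq, map_sub]

lemma pd_neg {σ : Type*} (i : σ) (a : MvPowerSeries σ ℂ) : pd i (-a) = - pd i a := by
  simp only [pd_eq, map_neg]

lemma pd_sum {σ ι : Type*} (i : σ) (s : Finset ι) (a : ι → MvPowerSeries σ ℂ) :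
    pd i (∑ j ∈ s, a j) = ∑ j ∈ s, pd i (a j) := by
  simp only [pd_eq, map_sum]

lemma pd_comm {σ : Type*} (i j : σ) (a : MvPowerSeries σ ℂ) : pd i (pd j a) = pd j (pd i a) := by
  classical
  ext α
  simp only [coeff_pd]
  rw [add_right_comm]
  by_cases h : i = j
  · subst h; rfl
  · have h' : j ≠ i := fun e => h e.symm
    simp [h, h']; ring

/-- antisymmetric double sums vanish -/
lemma antisymm_sum {n : ℕ} (t : Fin n → Fin n → R' n)
    (h : ∀ i j, t i j = - t j i) : ∑ i, ∑ j, t i j = 0 := by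
  have h1 : ∑ i, ∑ j, t i j = - ∑ i, ∑ j, t i j := by
    conv_lhs => rw [Finset.sum_comm]
    rw [← Finset.sum_neg_distrib]
    refine Finset.sum_congr rfl fun i _ => ?_
    rw [← Finset.sum_neg_distrib]
    exact Finset.sum_congr rfl fun j _ => h j i
  ext α
  have h2 := congrArg (MvPowerSeries.coeff α) h1
  rw [map_neg] at h2
  rw [map_zero]
  exact self_eq_neg.1 h2

/-- The `k`-th coefficient in `s` of `∑ Fᵢ(qᵢ)`. -/
def LL (n : ℕ) (f : R' n) (q : ℕ → Fin n → R' n) : ℕ → R' n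
  | 0 => ∑ i, pd i f * q 0 i
  | k+1 => ∑ i, (pd i f * q (k+1) i - pd i (q k i))

lemma uniq_seq (n : ℕ) (f : R' n) (m : ℕ) (hiso : mx n ^ m ≤ Jf n f) (μ : ℕ) (mb : Fin μ → R' n)
    (hbasis : ∀ g : R' n, ∃! c : Fin μ → ℂ, g - ∑ i, c i • mb i ∈ Jf n f) (k : ℕ) :
    ∀ (c : ℕ → Fin μ → ℂ) (q : ℕ → Fin n → R' n),
      (∀ k, ∑ i, c k i • mb i = LL n f q k) → c k = 0 := by
  have base : ∀ (c : ℕ → Fin μ → ℂ) (q : ℕ → Fin n → R' n),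
      (∀ k, ∑ i, c k i • mb i = LL n f q k) → c 0 = 0 := by
    intro c q h
    refine (hbasis 0).unique ?_ ?_
    · rw [zero_sub, h 0]
      refine neg_mem (Ideal.sum_mem _ fun i _ => Ideal.mul_mem_right _ _ (Ideal.subset_span ⟨i, rfl⟩))
    · simp
  induction k with
  | zero => exact base
  | succ k ih =>
    intro c q h
    have hc0 := base c q h
    have h0 : ∑ i, pd i f * q 0 i = 0 := by
      have := h 0
      rw [hc0] at this
      simpa [LL] using this.symm
    obtain ⟨a, ha, hqa⟩ := jac_trivial n f m hiso (q 0) h0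
    refine ih (fun k => c (k+1)) (fun k => match k with
      | 0 => fun j => q 1 j - ∑ i, pd i (a i j)
      | k+1 => q (k+2)) ?_
    intro l
    match l with
    | 0 =>
      rw [h 1]
      simp only [LL]
      have h1 : ∑ i, pd i (q 0 i) = ∑ j, pd j f * ∑ i, pd i (a i j) := by
        have e1 : ∑ i, ∑ j, pd i (pd j f) * a i j = 0 := by
          apply antisymm_sum
          intro i j; rw [pd_comm, ha i j]; ring
        simp only [hqa, pd_sum, pd_mul, Finset.sum_add_distrib]
        rw [e1, zero_add, Finset.sum_comm]
        simp only [Finset.mul_sum]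
      simp only [mul_sub, Finset.sum_sub_distrib]
      rw [h1]
    | 1 =>
      rw [h 2]
      simp only [LL]
      have e2 : ∑ i, pd i (∑ j, pd j (a j i)) = 0 := by
        simp only [pd_sum]
        apply antisymm_sum
        intro i j; rw [pd_comm, ha j i, pd_neg, pd_neg]
      simp only [pd_sub, Finset.sum_sub_distrib]
      rw [e2, sub_zero]
    | l+2 =>
      rw [h (l+3)]; rfl

lemma exist_seq (n : ℕ) (f : R' n) (μ : ℕ) (mb : Fin μ → R' n)
    (hbasis : ∀ g : R' n, ∃! c : Fin μ → ℂ, g - ∑ i, c i • mb i ∈ Jf n f) (P : ℕ → R' n) :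
    ∃ (c : ℕ → Fin μ → ℂ) (q : ℕ → Fin n → R' n),
      ∀ k, P k - ∑ i, c k i • mb i = LL n f q k := by
  have h : ∀ g : R' n, ∃ (c : Fin μ → ℂ) (q : Fin n → R' n),
      g - ∑ i, c i • mb i = ∑ i, pd i f * q i := by
    intro g
    obtain ⟨c, hc, _⟩ := hbasis g
    obtain ⟨v, hv⟩ := (Ideal.mem_span_range_iff_exists_fun).1 hc
    exact ⟨c, v, by rw [← hv]; exact Finset.sum_congr rfl fun i _ => mul_comm _ _⟩
  choose cc qq hh using h
  let G : ℕ → R' n := fun k => Nat.rec (P 0) (fun k g => P (k+1) + ∑ i, pd i (qq g i)) k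
  have hG : ∀ k, G (k+1) = P (k+1) + ∑ i, pd i (qq (G k) i) := fun k => rfl
  refine ⟨fun k => cc (G k), fun k => qq (G k), fun k => ?_⟩
  match k with
  | 0 => exact hh (P 0)
  | k+1 =>
    have := hh (G (k+1))
    simp only [LL, Finset.sum_sub_distrib]
    rw [← this, hG]; ring

/-- `A ≃ R[[s]]` -/
abbrev Phi (n : ℕ) : A' n ≃ₐ[ℂ] PowerSeries (R' n) := MvPowerSeries.finSuccEquiv ℂ n

lemma tailF_cons (n k : ℕ) (x : Fin n →₀ ℕ) : tailF n (x.cons k) = x := by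
  ext i; simp [tailF]

lemma Phi_inclR (n : ℕ) (g : R' n) : Phi n (inclR n g) = PowerSeries.C g := by
  ext k x
  rw [MvPowerSeries.coeff_coeff_finSuccEquiv, coeff_inclR, tailF_cons, PowerSeries.coeff_C]
  rw [Finsupp.cons_zero]
  by_cases h : k = 0
  · rw [if_pos h, if_pos h]
  · rw [if_neg h, if_neg h, map_zero]

lemma Phi_toA (n : ℕ) (p : PowerSeries ℂ) :
    Phi n (toA n p) = PowerSeries.map MvPowerSeries.C p := by
  classical
  ext k x
  rw [MvPowerSeries.coeff_coeff_finSuccEquiv, PowerSeries.coeff_map, MvPowerSeries.coeff_C]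
  change (if tailF n (x.cons k) = 0 then PowerSeries.coeff ((x.cons k) 0) p else 0) = _
  rw [tailF_cons, Finsupp.cons_zero]

lemma Phi_pd (n : ℕ) (i : Fin n) (g : A' n) (k : ℕ) :
    PowerSeries.coeff k (Phi n (pd i.succ g)) = pd i (PowerSeries.coeff k (Phi n g)) := by
  ext x
  rw [MvPowerSeries.coeff_coeff_finSuccEquiv, coeff_pd, coeff_pd,
    MvPowerSeries.coeff_coeff_finSuccEquiv, Finsupp.cons_succ]
  congr 3
  ext j
  refine Fin.cases ?_ (fun j => ?_) j
  · simp
  · simp [Finsupp.single_apply]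

lemma Phi_FF (n : ℕ) (f : R' n) (q : Fin n → A' n) (k : ℕ) :
    PowerSeries.coeff k (Phi n (∑ i, FF n f i (q i))) =
      LL n f (fun k i => PowerSeries.coeff k (Phi n (q i))) k := by
  have hs : Phi n (sv n) = PowerSeries.X := MvPowerSeries.finSuccEquiv_X_zero
  match k with
  | 0 =>
    simp only [LL, FF, map_sum, map_sub, map_mul, hs, Phi_inclR, PowerSeries.coeff_C_mul,
      PowerSeries.coeff_zero_X_mul, sub_zero]
  | k+1 => 
    simp only [LL, FF, map_sum, map_sub, map_mul, hs, Phi_inclR, PowerSeries.coeff_C_mul,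
      PowerSeries.coeff_succ_X_mul, Phi_pd]

lemma Phi_comb (n μ : ℕ) (c : Fin μ → PowerSeries ℂ) (mb : Fin μ → R' n) (k : ℕ) :
    PowerSeries.coeff k (Phi n (∑ i, toA n (c i) * inclR n (mb i))) =
      ∑ i, PowerSeries.coeff k (c i) • mb i := by
  simp only [map_sum, map_mul, Phi_toA, Phi_inclR, PowerSeries.coeff_mul_C, PowerSeries.coeff_map,
    MvPowerSeries.smul_eq_C_mul]

lemma mem_Mset_iff (n : ℕ) (f : R' n) (a : A' n) :
    a ∈ Mset n f ↔ ∃ q : ℕ → Fin n → R' n, ∀ k, PowerSeries.coeff k (Phi n a) = LL n f q k := by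
  constructor
  · rintro ⟨q, rfl⟩
    exact ⟨_, Phi_FF n f q⟩
  · rintro ⟨q, hq⟩
    refine ⟨fun i => (Phi n).symm (PowerSeries.mk fun k => q k i), ?_⟩
    apply (Phi n).injective
    ext1 k
    rw [Phi_FF, hq]
    simp

lemma LL_sub (n : ℕ) (f : R' n) (q q' : ℕ → Fin n → R' n) (k : ℕ) :
    LL n f q k - LL n f q' k = LL n f (q - q') k := by
  match k with
  | 0 => simp [LL, mul_sub]
  | k+1 => simp [LL, mul_sub, pd_sub]; ring

/-- **Basis lifting for the formal Brieskorn lattice**: if `m₁,…,m_μ ∈ R` are power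
series whose residue classes form a `ℂ`-basis of the Milnor algebra `R/J(f)`
(i.e. every `g ∈ R` is congruent modulo `J(f)` to a unique `ℂ`-linear combination
of the `mᵢ`), then their residue classes in `H = A/M` form a `ℂ[[s]]`-basis of `H`:
every element of `A` is congruent modulo `M` to a unique `ℂ[[s]]`-linear
combination of `m₁,…,m_μ`. -/
theorem brieskorn_basis_lifting (n : ℕ) (hn : 1 ≤ n) (f : R' n)
    (hf0 : MvPowerSeries.constantCoeff f = 0)
    (m : ℕ) (hm : 1 ≤ m) (hiso : mx n ^ m ≤ Jf n f)
    (μ : ℕ) (mb : Fin μ → R' n)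
    (hbasis : ∀ g : R' n, ∃! c : Fin μ → ℂ, g - ∑ i, c i • mb i ∈ Jf n f) :
    ∀ p : A' n, ∃! c : Fin μ → PowerSeries ℂ,
      p - ∑ i, toA n (c i) * inclR n (mb i) ∈ Mset n f := by
  intro p
  obtain ⟨c, q, hcq⟩ := exist_seq n f μ mb hbasis (fun k => PowerSeries.coeff k (Phi n p))
  refine ⟨fun i => PowerSeries.mk fun k => c k i, ?_, ?_⟩
  · refine (mem_Mset_iff n f _).2 ⟨q, fun k => ?_⟩
    rw [map_sub, map_sub, Phi_comb, ← hcq]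
    simp
  · intro c' hc'
    obtain ⟨q', hq'⟩ := (mem_Mset_iff n f _).1 hc'
    have key := fun k => uniq_seq n f m hiso μ mb hbasis k
      (fun k i => PowerSeries.coeff k (c' i) - c k i) (q - q') (fun k => by
        rw [← LL_sub, ← hcq, ← hq', map_sub, map_sub, Phi_comb]
        simp only [sub_smul, Finset.sum_sub_distrib]
        ring)
    funext i
    ext k
    have := congrFun (key k) i
    simpa [sub_eq_zero] using this
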